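/- Let α ∈ (0,1), T > 0, b > 0, let s : [0,T] → ℝ be absolutely continuous with s(0) = b, ṡ ≥ 0, and t ↦ t^{1−α} ṡ(t) continuous on [0,T], and let m ∈ ℕ. If w : (0,T) → ℝ^{m+1} is measurable with p ↦ p^{1−α} w(p) ∈ L^∞(0,T), then the function g₂(τ) = ∫₀^τ (τ−p)^{−α} B(p,τ) w(p) dp has an absolutely continuous representative: there exists g̃₂ ∈ AC([0,T]; ℝ^{m+1}) with g̃₂(0) = 0 and g₂ = g̃₂ almost everywhere on [0,T]. -/

import Mathlib

open MeasureTheory Set Filter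
open scoped Topology

/-- Eigenvalues `λ_n(t) = (π / s(t)) (n + 1/2)`. -/
noncomputable def lam (s : ℝ → ℝ) (n : ℕ) (t : ℝ) : ℝ :=
  Real.pi / s t * (n + 1 / 2)

/-- Eigenfunctions `φ_n(x,t) = √(2/s(t)) cos(λ_n(t) x)`. -/
noncomputable def phi (s : ℝ → ℝ) (n : ℕ) (x t : ℝ) : ℝ :=
  Real.sqrt (2 / s t) * Real.cos (lam s n t * x)

/-- `B(τ,t)_{n,k} = ∫₀^{s(τ)} φ_n(x,τ)[φ_k(x,t) − φ_k(x,τ)] dx`. -/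
noncomputable def Bmat (s : ℝ → ℝ) (m : ℕ) (τ t : ℝ) :
    Matrix (Fin (m + 1)) (Fin (m + 1)) ℝ :=
  Matrix.of fun n k : Fin (m + 1) =>
    ∫ x in (0:ℝ)..(s τ), phi s n x τ * (phi s k x t - phi s k x τ)

/-! After rescaling `x = s(p) y`, the matrix `B(p,τ)` depends only on the ratio `s(p) / s(τ)`: it
is `G (s(p) / s(τ))` for a `C¹` function `G` with `G 1 = 0`. Hence `K(p,q) = B(p,q)` vanishes at
`q = p` and `∂_q K = O(q^{α-1})`, which for `0 < γ < α`, `γ ≤ 1 - α` is at most a constant times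
`(q - p)^{α+γ-1} p^{-γ}`. So `(q - p)^{-α} K(p,q)` still vanishes at `q = p`, and its
`q`-derivative `k(p,q)` is `O((q - p)^{γ-1} p^{-γ})`. Together with `w(p) = O(p^{α-1})` this
makes `k(p,q) w(p)` integrable on the triangle `0 < p < q < τ`, and Fubini turns
`∫₀^τ (∫_p^τ k(p,q) dq) w(p) dp`, which is `g₂(τ)`, into `∫₀^τ (∫₀^q k(p,q) w(p) dp) dq`. -/

section Triangle

variable {E : Type*} [NormedAddCommGroup E] {T a e : ℝ}

/-- The open triangle `0 < p < q < T`, over which Volterra kernels `k p q` are integrated. -/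
def timeTriangle (T : ℝ) : Set (ℝ × ℝ) :=
  {z | 0 < z.1 ∧ z.1 < z.2 ∧ z.2 < T}

theorem measurableSet_timeTriangle (T : ℝ) : MeasurableSet (timeTriangle T) :=
  (measurableSet_lt measurable_const measurable_fst).inter
    ((measurableSet_lt measurable_fst measurable_snd).inter
      (measurableSet_lt measurable_snd measurable_const))

theorem timeTriangle_subset_prod (T : ℝ) : timeTriangle T ⊆ Ioo 0 T ×ˢ Ioo 0 T :=
  fun _ hz => ⟨⟨hz.1, hz.2.1.trans hz.2.2⟩, hz.1.trans hz.2.1, hz.2.2⟩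

theorem timeTriangle_mono {τ : ℝ} (h : τ ≤ T) : timeTriangle τ ⊆ timeTriangle T :=
  fun _ hz => ⟨hz.1, hz.2.1, hz.2.2.trans_le h⟩

-- The function is the integrand of the convolution of two integrable powers.
theorem integrableOn_sub_rpow_mul_rpow (T : ℝ) (ha : -1 < a) (he : -1 < e) :
    IntegrableOn (fun z : ℝ × ℝ => (z.2 - z.1) ^ a * z.1 ^ e) (timeTriangle T) := by
  have rpow_integrable {r : ℝ} (hr : -1 < r) :
      Integrable ((Ioo 0 T).indicator fun x : ℝ => x ^ r) := by
    rw [integrable_indicator_iff measurableSet_Ioo]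
    rcases le_or_gt T 0 with hT | hT
    · simp [Ioo_eq_empty hT.not_gt]
    · exact (intervalIntegral.integrableOn_Ioo_rpow_iff hT).2 hr
  have convolution_integrable := ((rpow_integrable he).convolution_integrand
    (ContinuousLinearMap.mul ℝ ℝ) (rpow_integrable ha)).swap
  refine convolution_integrable.integrableOn.congr_fun (fun z hz => ?_)
    (measurableSet_timeTriangle T)
  have hp : z.1 ∈ Ioo 0 T := (timeTriangle_subset_prod T hz).1
  have hqp : z.2 - z.1 ∈ Ioo 0 T := ⟨sub_pos.2 hz.2.1, by linarith [hz.1, hz.2.2]⟩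
  simp [hp, hqp, mul_comm]

variable [NormedSpace ℝ E] {f : ℝ → ℝ → E}

theorem integral_indicator_timeTriangle_right (f : ℝ → ℝ → E) (T p : ℝ) :
    ∫ q, (timeTriangle T).indicator f.uncurry (p, q) =
      (Ioo 0 T).indicator (fun p => ∫ q in p..T, f p q) p := by
  by_cases hp : p ∈ Ioo 0 T
  · rw [indicator_of_mem hp, intervalIntegral.integral_of_le hp.2.le,
      integral_Ioc_eq_integral_Ioo, ← integral_indicator measurableSet_Ioo]
    congr with q
    simp [indicator, timeTriangle, hp.1]
  · have hslice (q : ℝ) : (p, q) ∉ timeTriangle T :=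
      fun hz => hp (timeTriangle_subset_prod T hz).1
    simp [hslice, hp]

theorem integral_indicator_timeTriangle_left (f : ℝ → ℝ → E) (T q : ℝ) :
    ∫ p, (timeTriangle T).indicator f.uncurry (p, q) =
      (Ioo 0 T).indicator (fun q => ∫ p in 0..q, f p q) q := by
  by_cases hq : q ∈ Ioo 0 T
  · rw [indicator_of_mem hq, intervalIntegral.integral_of_le hq.1.le,
      integral_Ioc_eq_integral_Ioo, ← integral_indicator measurableSet_Ioo]
    congr with p
    simp [indicator, timeTriangle, hq.2]
  · have hslice (p : ℝ) : (p, q) ∉ timeTriangle T :=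
      fun hz => hq (timeTriangle_subset_prod T hz).2
    simp [hslice, hq]

theorem integrableOn_integral_timeTriangle (hf : IntegrableOn f.uncurry (timeTriangle T)) :
    IntegrableOn (fun q => ∫ p in 0..q, f p q) (Icc 0 T) := by
  have hprod : Integrable ((timeTriangle T).indicator f.uncurry) (volume.prod volume) :=
    hf.integrable_indicator (measurableSet_timeTriangle T)
  rw [integrableOn_Icc_iff_integrableOn_Ioo, ← integrable_indicator_iff measurableSet_Ioo]
  simpa only [integral_indicator_timeTriangle_left] using hprod.integral_prod_right

theorem integral_integral_timeTriangle_swap (hT : 0 ≤ T)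
    (hf : IntegrableOn f.uncurry (timeTriangle T)) :
    ∫ p in 0..T, ∫ q in p..T, f p q = ∫ q in 0..T, ∫ p in 0..q, f p q := by
  have hprod : Integrable ((timeTriangle T).indicator f.uncurry) (volume.prod volume) :=
    hf.integrable_indicator (measurableSet_timeTriangle T)
  have hswap := integral_integral_swap
    (f := fun p q => (timeTriangle T).indicator f.uncurry (p, q)) hprod
  simp only [integral_indicator_timeTriangle_right, integral_indicator_timeTriangle_left,
    integral_indicator measurableSet_Ioo] at hswap
  simpa only [intervalIntegral.integral_of_le hT, integral_Ioc_eq_integral_Ioo] using hswap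

end Triangle

section RpowPrimitive

variable {E : Type*} [NormedAddCommGroup E] [NormedSpace ℝ E]
  {h h' : ℝ → E} {a β D p τ : ℝ}

/-- `h` is the primitive on `(p, τ]`, vanishing at `p`, of a continuous function `h'` with the
power bound `‖h' q‖ ≤ D (q - p) ^ (β - 1)`, which is integrable at `p` when `0 < β`. -/
structure IsRpowPrimitive (h h' : ℝ → E) (β D p τ : ℝ) : Prop where
  tendsto_zero : Tendsto h (𝓝[>] p) (𝓝 0)
  continuousOn : ContinuousOn h (Ioc p τ)
  hasDerivAt : ∀ q ∈ Ioo p τ, HasDerivAt h (h' q) q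
  continuousOn_deriv : ContinuousOn h' (Ioo p τ)
  norm_deriv_le : ∀ q ∈ Ioo p τ, ‖h' q‖ ≤ D * (q - p) ^ (β - 1)

/-- The derivative in `q` of `(q - p) ^ a • h q`, where `h'` is the derivative of `h`. -/
noncomputable def subRpowSMulDeriv (a p : ℝ) (h h' : ℝ → E) (q : ℝ) : E :=
  (q - p) ^ a • h' q + (a * (q - p) ^ (a - 1)) • h q

theorem intervalIntegrable_sub_rpow (ha : -1 < a) (p τ : ℝ) :
    IntervalIntegrable (fun q => (q - p) ^ a) volume p τ := by
  simpa using (intervalIntegral.intervalIntegrable_rpow' (a := 0) (b := τ - p) ha).comp_sub_right p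

theorem integral_sub_rpow_sub_one (hβ : 0 < β) (p τ : ℝ) :
    ∫ q in p..τ, (q - p) ^ (β - 1) = (τ - p) ^ β / β := by
  rw [intervalIntegral.integral_comp_sub_right (fun x => x ^ (β - 1)),
    integral_rpow (Or.inl (by linarith))]
  simp [Real.zero_rpow hβ.ne']

theorem hasDerivAt_sub_rpow (a : ℝ) {p q : ℝ} (hpq : p < q) :
    HasDerivAt (fun q => (q - p) ^ a) (a * (q - p) ^ (a - 1)) q := by
  simpa using ((hasDerivAt_id q).sub_const p).rpow_const (p := a) (Or.inl (sub_pos.2 hpq).ne')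

namespace IsRpowPrimitive

theorem mono (hh : IsRpowPrimitive h h' β D p τ) {q : ℝ} (hq : q ≤ τ) :
    IsRpowPrimitive h h' β D p q where
  tendsto_zero := hh.tendsto_zero
  continuousOn := hh.continuousOn.mono (Ioc_subset_Ioc_right hq)
  hasDerivAt r hr := hh.hasDerivAt r (Ioo_subset_Ioo_right hq hr)
  continuousOn_deriv := hh.continuousOn_deriv.mono (Ioo_subset_Ioo_right hq)
  norm_deriv_le r hr := hh.norm_deriv_le r (Ioo_subset_Ioo_right hq hr)

theorem intervalIntegrable_deriv (hh : IsRpowPrimitive h h' β D p τ) (hβ : 0 < β)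
    (hpτ : p ≤ τ) : IntervalIntegrable h' volume p τ := by
  have majorant_integrable : IntervalIntegrable (fun q => D * (q - p) ^ (β - 1)) volume p τ :=
    (intervalIntegrable_sub_rpow (by linarith) p τ).const_mul D
  rw [intervalIntegrable_iff_integrableOn_Ioo_of_le hpτ] at majorant_integrable ⊢
  exact majorant_integrable.mono'
    (hh.continuousOn_deriv.aestronglyMeasurable measurableSet_Ioo)
    (ae_restrict_of_forall_mem measurableSet_Ioo hh.norm_deriv_le)

theorem integral_deriv [CompleteSpace E] (hh : IsRpowPrimitive h h' β D p τ) (hβ : 0 < β)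
    (hpτ : p < τ) : ∫ q in p..τ, h' q = h τ := by
  have hend : Tendsto h (𝓝[<] τ) (𝓝 (h τ)) :=
    ((hh.continuousOn τ ⟨hpτ, le_rfl⟩).mono Ioo_subset_Ioc_self).mono_left
      (nhdsWithin_Ioo_eq_nhdsLT hpτ).ge
  rw [intervalIntegral.integral_eq_sub_of_hasDerivAt_of_tendsto hpτ hh.hasDerivAt
    (hh.intervalIntegrable_deriv hβ hpτ.le) hh.tendsto_zero hend, sub_zero]

theorem norm_le [CompleteSpace E] (hh : IsRpowPrimitive h h' β D p τ) (hβ : 0 < β) (hpτ : p < τ) :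
    ‖h τ‖ ≤ D / β * (τ - p) ^ β := by
  have majorant_integrable : IntervalIntegrable (fun q => D * (q - p) ^ (β - 1)) volume p τ :=
    (intervalIntegrable_sub_rpow (by linarith) p τ).const_mul D
  have hbound : ∀ᵐ q, q ∈ Ioc p τ → ‖h' q‖ ≤ D * (q - p) ^ (β - 1) := by
    filter_upwards [Measure.ae_ne volume τ] with q hqτ hq
    exact hh.norm_deriv_le q ⟨hq.1, hq.2.lt_of_ne hqτ⟩
  calc ‖h τ‖ = ‖∫ q in p..τ, h' q‖ := by rw [hh.integral_deriv hβ hpτ]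
    _ ≤ ∫ q in p..τ, D * (q - p) ^ (β - 1) :=
      intervalIntegral.norm_integral_le_of_norm_le hpτ.le hbound majorant_integrable
    _ = D / β * (τ - p) ^ β := by
      rw [intervalIntegral.integral_const_mul, integral_sub_rpow_sub_one hβ]
      ring

theorem tendsto_sub_rpow_smul [CompleteSpace E] (hh : IsRpowPrimitive h h' β D p τ) (hβ : 0 < β)
    (haβ : 0 < a + β) (hpτ : p < τ) :
    Tendsto (fun q => (q - p) ^ a • h q) (𝓝[>] p) (𝓝 0) := by
  have hmajorant : Tendsto (fun q => D / β * (q - p) ^ (a + β)) (𝓝[>] p) (𝓝 0) := by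
    have hcont : Continuous fun q : ℝ => D / β * (q - p) ^ (a + β) :=
      continuous_const.mul ((continuous_sub_right p).rpow_const fun _ => Or.inr haβ.le)
    simpa [Real.zero_rpow haβ.ne'] using (hcont.tendsto p).mono_left nhdsWithin_le_nhds
  refine squeeze_zero_norm' ?_ hmajorant
  filter_upwards [Ioo_mem_nhdsGT hpτ] with q hq
  have hqp : 0 < q - p := sub_pos.2 hq.1
  calc ‖(q - p) ^ a • h q‖ = (q - p) ^ a * ‖h q‖ := by
        rw [norm_smul, Real.norm_of_nonneg (by positivity)]
    _ ≤ (q - p) ^ a * (D / β * (q - p) ^ β) := by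
        gcongr
        exact (hh.mono hq.2.le).norm_le hβ hq.1
    _ = D / β * (q - p) ^ (a + β) := by
        rw [Real.rpow_add hqp]
        ring

theorem norm_subRpowSMulDeriv_le [CompleteSpace E] (hh : IsRpowPrimitive h h' β D p τ)
    (hβ : 0 < β) (a : ℝ) {q : ℝ} (hq : q ∈ Ioo p τ) :
    ‖subRpowSMulDeriv a p h h' q‖ ≤ (1 + |a| / β) * D * (q - p) ^ (a + β - 1) := by
  have hqp : 0 < q - p := sub_pos.2 hq.1
  have hderiv : ‖(q - p) ^ a • h' q‖ ≤ (q - p) ^ a * (D * (q - p) ^ (β - 1)) := by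
    rw [norm_smul, Real.norm_of_nonneg (by positivity)]
    gcongr
    exact hh.norm_deriv_le q hq
  have hvalue : ‖(a * (q - p) ^ (a - 1)) • h q‖ ≤
      |a| * (q - p) ^ (a - 1) * (D / β * (q - p) ^ β) := by
    rw [norm_smul, norm_mul, Real.norm_eq_abs a, Real.norm_of_nonneg (by positivity)]
    gcongr
    exact (hh.mono hq.2.le).norm_le hβ hq.1
  have hderiv_exponent : (q - p) ^ (a + β - 1) = (q - p) ^ a * (q - p) ^ (β - 1) := by
    rw [← Real.rpow_add hqp, add_sub_assoc]
  have hvalue_exponent : (q - p) ^ (a + β - 1) = (q - p) ^ (a - 1) * (q - p) ^ β := by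
    rw [← Real.rpow_add hqp, add_sub_right_comm]
  refine (norm_add_le_of_le hderiv hvalue).trans_eq ?_
  linear_combination -D * hderiv_exponent - |a| / β * D * hvalue_exponent

theorem sub_rpow_smul [CompleteSpace E] (hh : IsRpowPrimitive h h' β D p τ) (hβ : 0 < β)
    (haβ : 0 < a + β) (hpτ : p < τ) :
    IsRpowPrimitive (fun q => (q - p) ^ a • h q) (subRpowSMulDeriv a p h h')
      (a + β) ((1 + |a| / β) * D) p τ where
  tendsto_zero := hh.tendsto_sub_rpow_smul hβ haβ hpτ
  continuousOn q hq :=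
    ((hasDerivAt_sub_rpow a hq.1).continuousAt.continuousWithinAt).smul (hh.continuousOn q hq)
  hasDerivAt q hq := (hasDerivAt_sub_rpow a hq.1).fun_smul (hh.hasDerivAt q hq)
  continuousOn_deriv q hq :=
    ((hasDerivAt_sub_rpow a hq.1).continuousAt.continuousWithinAt.smul
      (hh.continuousOn_deriv q hq)).add
    ((continuousWithinAt_const.mul
      (hasDerivAt_sub_rpow (a - 1) hq.1).continuousAt.continuousWithinAt).smul
      (hh.hasDerivAt q hq).continuousAt.continuousWithinAt)
  norm_deriv_le _ hq := hh.norm_subRpowSMulDeriv_le hβ a hq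

end IsRpowPrimitive

end RpowPrimitive

section Volterra

variable {E F : Type*} [NormedAddCommGroup E] [NormedSpace ℝ E] [NormedAddCommGroup F]
  [NormedSpace ℝ F] {K K' : ℝ → ℝ → E →L[ℝ] F} {u : ℝ → E} {a β e f C M T : ℝ}

theorem aestronglyMeasurable_clm_apply_timeTriangle
    (hK : ContinuousOn K.uncurry (timeTriangle T))
    (hu : AEStronglyMeasurable u (volume.restrict (Ioo 0 T))) :
    AEStronglyMeasurable (fun p q => K p q (u p)).uncurry (volume.restrict (timeTriangle T)) := by
  have hu_fst : AEStronglyMeasurable (fun z : ℝ × ℝ => u z.1)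
      (volume.restrict (timeTriangle T)) := by
    have := hu.comp_fst (ν := volume.restrict (Ioo 0 T))
    rw [Measure.prod_restrict] at this
    exact this.mono_set (timeTriangle_subset_prod T)
  exact (ContinuousLinearMap.id ℝ (E →L[ℝ] F)).aestronglyMeasurable_comp₂
    (hK.aestronglyMeasurable (measurableSet_timeTriangle T)) hu_fst

theorem integrableOn_clm_apply_timeTriangle
    (ha : -1 < a) (hef : -1 < e + f)
    (hK : ContinuousOn K.uncurry (timeTriangle T))
    (hK_le : ∀ p q, (p, q) ∈ timeTriangle T → ‖K p q‖ ≤ C * p ^ e * (q - p) ^ a)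
    (hu : AEStronglyMeasurable u (volume.restrict (Ioo 0 T)))
    (hu_le : ∀ᵐ p ∂volume.restrict (Ioo 0 T), ‖u p‖ ≤ M * p ^ f) :
    IntegrableOn (fun p q => K p q (u p)).uncurry (timeTriangle T) := by
  have hu_fst_le : ∀ᵐ z : ℝ × ℝ, z.1 ∈ Ioo 0 T → ‖u z.1‖ ≤ M * z.1 ^ f :=
    Measure.quasiMeasurePreserving_fst.ae ((ae_restrict_iff' measurableSet_Ioo).1 hu_le)
  refine ((integrableOn_sub_rpow_mul_rpow T ha hef).const_mul (C * M)).mono'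
    (aestronglyMeasurable_clm_apply_timeTriangle hK hu) ?_
  filter_upwards [ae_restrict_of_ae hu_fst_le,
    ae_restrict_mem (measurableSet_timeTriangle T)] with ⟨p, q⟩ hup hpq
  have hKpq := hK_le p q hpq
  calc ‖K p q (u p)‖ ≤ ‖K p q‖ * ‖u p‖ := (K p q).le_opNorm (u p)
    _ ≤ (C * p ^ e * (q - p) ^ a) * (M * p ^ f) :=
      mul_le_mul hKpq (hup (timeTriangle_subset_prod T hpq).1) (norm_nonneg _)
        ((norm_nonneg _).trans hKpq)
    _ = C * M * ((q - p) ^ a * p ^ (e + f)) := by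
      rw [Real.rpow_add hpq.1]
      ring

theorem continuousOn_subRpowSMulDeriv_timeTriangle
    (hK : ContinuousOn K.uncurry (timeTriangle T))
    (hK' : ContinuousOn K'.uncurry (timeTriangle T)) :
    ContinuousOn (fun p q => subRpowSMulDeriv a p (K p) (K' p) q).uncurry (timeTriangle T) := by
  have hpow (b : ℝ) : ContinuousOn (fun z : ℝ × ℝ => (z.2 - z.1) ^ b) (timeTriangle T) :=
    (continuousOn_snd.sub continuousOn_fst).rpow_const
      fun z hz => Or.inl (sub_pos.2 hz.2.1).ne'
  exact ((hpow a).smul hK').add ((continuousOn_const.mul (hpow (a - 1))).smul hK)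

theorem exists_integrableOn_volterra_eq_integral [CompleteSpace F]
    (hβ : 0 < β) (haβ : 0 < a + β) (hef : -1 < e + f)
    (hK : ContinuousOn K.uncurry (timeTriangle T))
    (hK' : ContinuousOn K'.uncurry (timeTriangle T))
    (hprim : ∀ p ∈ Ioo 0 T, IsRpowPrimitive (K p) (K' p) β (C * p ^ e) p T)
    (hu : AEStronglyMeasurable u (volume.restrict (Ioo 0 T)))
    (hu_le : ∀ᵐ p ∂volume.restrict (Ioo 0 T), ‖u p‖ ≤ M * p ^ f) :
    ∃ d : ℝ → F, IntegrableOn d (Icc 0 T) ∧ ∀ τ ∈ Icc 0 T,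
      ∫ p in 0..τ, (τ - p) ^ a • K p τ (u p) = ∫ q in 0..τ, d q := by
  set k : ℝ → ℝ → E →L[ℝ] F := fun p => subRpowSMulDeriv a p (K p) (K' p)
  have hk_prim {p : ℝ} (hp : p ∈ Ioo 0 T) :
      IsRpowPrimitive (fun q => (q - p) ^ a • K p q) (k p) (a + β)
        ((1 + |a| / β) * (C * p ^ e)) p T :=
    (hprim p hp).sub_rpow_smul hβ haβ hp.2
  have hk_le (p q : ℝ) (hpq : (p, q) ∈ timeTriangle T) :
      ‖k p q‖ ≤ (1 + |a| / β) * C * p ^ e * (q - p) ^ (a + β - 1) := by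
    simpa only [mul_assoc] using
      (hk_prim (timeTriangle_subset_prod T hpq).1).norm_deriv_le q hpq.2
  have hk_int : IntegrableOn (fun p q => k p q (u p)).uncurry (timeTriangle T) :=
    integrableOn_clm_apply_timeTriangle (by linarith) hef
      (continuousOn_subRpowSMulDeriv_timeTriangle hK hK') hk_le hu hu_le
  refine ⟨fun q => ∫ p in 0..q, k p q (u p), integrableOn_integral_timeTriangle hk_int,
    fun τ hτ => ?_⟩
  rw [← integral_integral_timeTriangle_swap hτ.1 (hk_int.mono_set (timeTriangle_mono hτ.2))]
  refine intervalIntegral.integral_congr_Ioo_of_le hτ.1 fun p hp => ?_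
  have hkp := (hk_prim ⟨hp.1, hp.2.trans_le hτ.2⟩).mono hτ.2
  rw [← ContinuousLinearMap.intervalIntegral_apply (hkp.intervalIntegrable_deriv haβ hp.2.le),
    hkp.integral_deriv haβ hp.2, smul_apply]

end Volterra

section RatioKernel

variable {E F V : Type*} [NormedAddCommGroup E] [NormedSpace ℝ E] [NormedAddCommGroup F]
  [NormedSpace ℝ F] [NormedAddCommGroup V] [NormedSpace ℝ V] {s s' : ℝ → ℝ} {α C M N T : ℝ}

/-- The derivative in `q` of the ratio kernel `G (s p / s q)`, where `s'` is the derivative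
of `s`. -/
noncomputable def ratioKernelDeriv (G : ℝ → V) (s s' : ℝ → ℝ) (p q : ℝ) : V :=
  -s' q • (s p / s q ^ 2) • deriv G (s p / s q)

theorem hasDerivAt_ratioKernel {G : ℝ → V} {p q : ℝ} (hG : DifferentiableAt ℝ G (s p / s q))
    (hs : HasDerivAt s (s' q) q) (hsq : s q ≠ 0) :
    HasDerivAt (fun q => G (s p / s q)) (ratioKernelDeriv G s s' p q) q := by
  have hratio : HasDerivAt (fun q => s p / s q) (-s' q * (s p / s q ^ 2)) q := by
    simpa only [div_eq_mul_inv, neg_mul, mul_neg, mul_left_comm] using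
      (hs.fun_inv hsq).const_mul (s p)
  exact (hG.hasDerivAt.scomp q hratio).congr_deriv (mul_smul _ _ _)

theorem continuousOn_comp_ratio {X : Type*} [TopologicalSpace X] {G : ℝ → X} {S : Set ℝ}
    (hG : ContinuousOn G (Ioi 0)) (hs : ContinuousOn s S) (hs_pos : ∀ t ∈ S, 0 < s t) :
    ContinuousOn (fun p q => G (s p / s q)).uncurry (S ×ˢ S) :=
  hG.comp ((hs.comp continuousOn_fst fun _ hz => hz.1).div
    (hs.comp continuousOn_snd fun _ hz => hz.2) fun z hz => (hs_pos z.2 hz.2).ne')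
    fun z hz => div_pos (hs_pos z.1 hz.1) (hs_pos z.2 hz.2)

theorem continuousOn_ratio_smul_comp_ratio {G : ℝ → V} {S : Set ℝ} (hG : ContinuousOn G (Ioi 0))
    (hs : ContinuousOn s S) (hs_pos : ∀ t ∈ S, 0 < s t) :
    ContinuousOn (fun p q => (s p / s q ^ 2) • G (s p / s q)).uncurry (S ×ˢ S) :=
  ((hs.comp continuousOn_fst fun _ hz => hz.1).div
    ((hs.comp continuousOn_snd fun _ hz => hz.2).pow 2)
    fun z hz => pow_ne_zero 2 (hs_pos z.2 hz.2).ne').smul (continuousOn_comp_ratio hG hs hs_pos)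

theorem continuousOn_ratioKernelDeriv {G : ℝ → V} {S : Set ℝ}
    (hG : ContinuousOn (deriv G) (Ioi 0)) (hs : ContinuousOn s S) (hs_pos : ∀ t ∈ S, 0 < s t)
    (hs' : ContinuousOn s' S) :
    ContinuousOn (ratioKernelDeriv G s s').uncurry (S ×ˢ S) :=
  (hs'.comp continuousOn_snd fun _ hz => hz.2).neg.smul
    (continuousOn_ratio_smul_comp_ratio hG hs hs_pos)

theorem exists_norm_ratioKernelDeriv_le {G : ℝ → V} {S : Set ℝ} (hS : IsCompact S)
    (hG : ContinuousOn (deriv G) (Ioi 0)) (hs : ContinuousOn s S) (hs_pos : ∀ t ∈ S, 0 < s t) :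
    ∃ C, ∀ p ∈ S, ∀ q ∈ S, ‖ratioKernelDeriv G s s' p q‖ ≤ C * |s' q| := by
  obtain ⟨C, hC⟩ := (hS.prod hS).exists_bound_of_continuousOn
    (continuousOn_ratio_smul_comp_ratio hG hs hs_pos)
  refine ⟨C, fun p hp q hq => ?_⟩
  rw [ratioKernelDeriv, norm_smul, norm_neg, Real.norm_eq_abs, mul_comm]
  gcongr
  exact hC (p, q) ⟨hp, hq⟩

theorem rpow_add_le_sub_rpow_mul_rpow {a c p q : ℝ} (hp : 0 < p) (hpq : p < q) (ha : a ≤ 0)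
    (hc : c ≤ 0) : q ^ (a + c) ≤ (q - p) ^ a * p ^ c := by
  have hqp : 0 < q - p := sub_pos.2 hpq
  rw [Real.rpow_add (hp.trans hpq)]
  exact mul_le_mul (Real.rpow_le_rpow_of_nonpos hqp (by linarith) ha)
    (Real.rpow_le_rpow_of_nonpos hp hpq.le hc) (Real.rpow_nonneg (hp.trans hpq).le c)
    (by positivity)

theorem isRpowPrimitive_ratioKernel {G : ℝ → V} {β γ p : ℝ} (hβ : β ≤ 1) (hγ : 0 ≤ γ) (hC : 0 ≤ C)
    (hG : ContDiffOn ℝ 1 G (Ioi 0)) (hG_one : G 1 = 0)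
    (hs : ContinuousOn s (Icc 0 T)) (hs_pos : ∀ t ∈ Icc 0 T, 0 < s t)
    (hs_deriv : ∀ t ∈ Ioo 0 T, HasDerivAt s (s' t) t) (hs' : ContinuousOn s' (Ioo 0 T))
    (hp : p ∈ Ioo 0 T)
    (hle : ∀ q ∈ Ioo p T, ‖ratioKernelDeriv G s s' p q‖ ≤ C * q ^ (β - 1 - γ)) :
    IsRpowPrimitive (fun q => G (s p / s q)) (ratioKernelDeriv G s s' p) β (C * p ^ (-γ)) p T := by
  have hp' : p ∈ Icc 0 T := Ioo_subset_Icc_self hp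
  have hcont : ContinuousOn (fun q => G (s p / s q)) (Icc 0 T) :=
    (continuousOn_comp_ratio hG.continuousOn hs hs_pos).uncurry_left p hp'
  refine ⟨?_, hcont.mono fun q hq => ⟨(hp.1.trans hq.1).le, hq.2⟩, fun q hq => ?_, ?_,
    fun q hq => ?_⟩
  · simpa only [div_self (hs_pos p hp').ne', hG_one] using
      (hcont.continuousAt (Icc_mem_nhds hp.1 hp.2)).tendsto.mono_left nhdsWithin_le_nhds
  · have hq' : q ∈ Ioo 0 T := ⟨hp.1.trans hq.1, hq.2⟩
    have hsq := hs_pos q (Ioo_subset_Icc_self hq')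
    exact hasDerivAt_ratioKernel ((hG.differentiableOn one_ne_zero).differentiableAt
      (Ioi_mem_nhds (div_pos (hs_pos p hp') hsq))) (hs_deriv q hq') hsq.ne'
  · exact ((continuousOn_ratioKernelDeriv (hG.continuousOn_deriv_of_isOpen isOpen_Ioi le_rfl)
      (hs.mono Ioo_subset_Icc_self) (fun t ht => hs_pos t (Ioo_subset_Icc_self ht))
      hs').uncurry_left p hp).mono (Ioo_subset_Ioo_left hp.1.le)
  · calc ‖ratioKernelDeriv G s s' p q‖ ≤ C * q ^ (β - 1 + -γ) := by
          simpa only [← sub_eq_add_neg] using hle q hq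
      _ ≤ C * ((q - p) ^ (β - 1) * p ^ (-γ)) := by
          gcongr
          exact rpow_add_le_sub_rpow_mul_rpow hp.1 hq.1 (by linarith) (by linarith)
      _ = C * p ^ (-γ) * (q - p) ^ (β - 1) := by ring

theorem exists_integrableOn_volterra_ratioKernel [CompleteSpace F] {G : ℝ → E →L[ℝ] F} {u : ℝ → E}
    (hα : α ∈ Ioo 0 1) (hG : ContDiffOn ℝ 1 G (Ioi 0)) (hG_one : G 1 = 0)
    (hs : ContinuousOn s (Icc 0 T)) (hs_pos : ∀ t ∈ Icc 0 T, 0 < s t)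
    (hs_deriv : ∀ t ∈ Ioo 0 T, HasDerivAt s (s' t) t) (hs' : ContinuousOn s' (Ioo 0 T))
    (hs'_le : ∀ t ∈ Ioo 0 T, |s' t| ≤ N * t ^ (α - 1))
    (hu : AEStronglyMeasurable u (volume.restrict (Ioo 0 T)))
    (hu_le : ∀ᵐ p ∂volume.restrict (Ioo 0 T), ‖u p‖ ≤ M * p ^ (α - 1)) :
    ∃ d : ℝ → F, IntegrableOn d (Icc 0 T) ∧ ∀ τ ∈ Icc 0 T,
      ∫ p in 0..τ, (τ - p) ^ (-α) • G (s p / s τ) (u p) = ∫ q in 0..τ, d q := by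
  have hG' : ContinuousOn (deriv G) (Ioi 0) := hG.continuousOn_deriv_of_isOpen isOpen_Ioi le_rfl
  obtain ⟨C, hC⟩ := exists_norm_ratioKernelDeriv_le (s' := s') isCompact_Icc hG' hs hs_pos
  have hle {p q : ℝ} (hp : p ∈ Ioo 0 T) (hq : q ∈ Ioo 0 T) :
      ‖ratioKernelDeriv G s s' p q‖ ≤ |C| * |N| * q ^ (α - 1) := by
    calc ‖ratioKernelDeriv G s s' p q‖ ≤ C * |s' q| :=
          hC p (Ioo_subset_Icc_self hp) q (Ioo_subset_Icc_self hq)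
      _ ≤ |C| * (|N| * q ^ (α - 1)) := by
          have hq_pow : 0 ≤ q ^ (α - 1) := Real.rpow_nonneg hq.1.le _
          gcongr
          · exact le_abs_self C
          · exact (hs'_le q hq).trans (by gcongr; exact le_abs_self N)
      _ = |C| * |N| * q ^ (α - 1) := by ring
  obtain ⟨γ, hγ, hγα, hαγ⟩ : ∃ γ, 0 < γ ∧ γ < α ∧ α + γ ≤ 1 :=
    ⟨α * (1 - α), by nlinarith [hα.1, hα.2], by nlinarith [hα.1, hα.2],
      by nlinarith [sq_nonneg (1 - α)]⟩
  refine exists_integrableOn_volterra_eq_integral (K := fun p q => G (s p / s q))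
    (K' := ratioKernelDeriv G s s') (β := α + γ) (e := -γ) (f := α - 1) (C := |C| * |N|) (M := M)
    (by linarith [hα.1]) (by linarith) (by linarith) ?_ ?_ (fun p hp => ?_) hu hu_le
  · exact (continuousOn_comp_ratio hG.continuousOn hs hs_pos).mono
      ((timeTriangle_subset_prod T).trans (prod_mono Ioo_subset_Icc_self Ioo_subset_Icc_self))
  · exact (continuousOn_ratioKernelDeriv hG' (hs.mono Ioo_subset_Icc_self)
      (fun t ht => hs_pos t (Ioo_subset_Icc_self ht)) hs').mono (timeTriangle_subset_prod T)
  · refine isRpowPrimitive_ratioKernel hαγ hγ.le (by positivity) hG hG_one hs hs_pos hs_deriv hs' hp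
      fun q hq => (hle hp ⟨hp.1.trans hq.1, hq.2⟩).trans_eq ?_
    ring_nf

end RatioKernel

section Sinc

theorem contDiff_sinc {n : WithTop ℕ∞} : ContDiff ℝ n Real.sinc := by
  refine contDiff_iff_contDiffAt.2 fun x => ?_
  rcases eq_or_ne x 0 with rfl | hx
  · obtain ⟨p, hp⟩ := Real.analyticAt_sin (x := 0)
    rw [Real.sinc_eq_dslope]
    exact hp.has_fpower_series_dslope_fslope.analyticAt.contDiffAt
  · refine (Real.contDiff_sin.contDiffAt.div contDiffAt_id hx).congr_of_eventuallyEq ?_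
    filter_upwards [isOpen_ne.mem_nhds hx] with y hy using Real.sinc_of_ne_zero hy

theorem integral_cos_mul (x : ℝ) : ∫ y in (0 : ℝ)..1, Real.cos (x * y) = Real.sinc x := by
  rcases eq_or_ne x 0 with rfl | hx
  · simp
  · simp [intervalIntegral.integral_comp_mul_left Real.cos hx, Real.sinc_of_ne_zero hx,
      div_eq_inv_mul]

theorem integral_cos_mul_mul_cos_mul (a c : ℝ) :
    ∫ y in (0 : ℝ)..1, Real.cos (a * y) * Real.cos (c * y) =
      (Real.sinc (a - c) + Real.sinc (a + c)) / 2 := by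
  rw [← integral_cos_mul, ← integral_cos_mul, ← intervalIntegral.integral_add
    (Continuous.intervalIntegrable (by fun_prop) _ _)
    (Continuous.intervalIntegrable (by fun_prop) _ _), ← intervalIntegral.integral_div]
  congr with y
  rw [sub_mul, add_mul, Real.cos_sub, Real.cos_add]
  ring

end Sinc

section Overlap

/-- The overlap `∫₀^{s(p)} φ_n(x,p) φ_k(x,t) dx` as a function of the ratio `r = s(p) / s(t)`: it is
`2 √r ∫₀¹ cos (π (n + 1/2) y) cos (π (k + 1/2) r y) dy`, in closed form. -/
noncomputable def overlap (n k : ℕ) (r : ℝ) : ℝ :=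
  √r * (Real.sinc (Real.pi * (n + 1 / 2) - Real.pi * (k + 1 / 2) * r) +
    Real.sinc (Real.pi * (n + 1 / 2) + Real.pi * (k + 1 / 2) * r))

/-- The change of the overlap matrix between the ratios `1` and `r`, as an operator: `B(p,t)` acts
as `overlapDiff m (s(p) / s(t))`. -/
noncomputable def overlapDiff (m : ℕ) (r : ℝ) : (Fin (m + 1) → ℝ) →L[ℝ] (Fin (m + 1) → ℝ) :=
  (Matrix.of fun n k : Fin (m + 1) =>
    overlap n k r - overlap n k 1).mulVecLin.toContinuousLinearMap

theorem contDiffOn_overlap (n k : ℕ) : ContDiffOn ℝ 1 (overlap n k) (Ioi 0) := by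
  have hsqrt : ContDiffOn ℝ 1 (fun r => √r) (Ioi 0) :=
    contDiffOn_id.sqrt fun r hr => (mem_Ioi.1 hr).ne'
  refine hsqrt.mul (ContDiff.contDiffOn ?_)
  exact (contDiff_sinc.comp (by fun_prop)).add (contDiff_sinc.comp (by fun_prop))

theorem contDiffOn_overlapDiff (m : ℕ) : ContDiffOn ℝ 1 (overlapDiff m) (Ioi 0) := by
  refine contDiffOn_clm_apply.2 fun v => contDiffOn_pi.2 fun n => ?_
  change ContDiffOn ℝ 1
    (fun r => ∑ k : Fin (m + 1), (overlap n k r - overlap n k 1) * v k) (Ioi 0)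
  exact ContDiffOn.sum fun k _ =>
    ((contDiffOn_overlap n k).sub contDiffOn_const).mul contDiffOn_const

theorem overlapDiff_one (m : ℕ) : overlapDiff m 1 = 0 := by
  ext v n
  simp [overlapDiff, Matrix.mulVec, dotProduct]

theorem mul_sqrt_two_div_mul_sqrt_two_div {x y : ℝ} (hx : 0 < x) (hy : 0 < y) :
    x * (√(2 / x) * √(2 / y)) = 2 * √(x / y) := by
  have hratio : √(2 / y) = √(2 / x) * √(x / y) := by
    rw [← Real.sqrt_mul (by positivity)]
    congr 1
    field_simp
  rw [hratio, ← mul_assoc (√(2 / x)), Real.mul_self_sqrt (by positivity)]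
  field_simp

theorem integral_phi_mul_phi (s : ℝ → ℝ) (n k : ℕ) {p t : ℝ} (hp : 0 < s p) (ht : 0 < s t) :
    ∫ x in 0..s p, phi s n x p * phi s k x t = overlap n k (s p / s t) := by
  have hscale := intervalIntegral.mul_integral_comp_mul_right (a := 0) (b := 1)
    (f := fun x => phi s n x p * phi s k x t) (s p)
  rw [zero_mul, one_mul] at hscale
  have hintegrand (y : ℝ) : phi s n (y * s p) p * phi s k (y * s p) t =
      √(2 / s p) * √(2 / s t) * (Real.cos (Real.pi * (n + 1 / 2) * y) *
        Real.cos (Real.pi * (k + 1 / 2) * (s p / s t) * y)) := by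
    have hn : lam s n p * (y * s p) = Real.pi * (n + 1 / 2) * y := by
      rw [lam]
      field_simp
    have hk : lam s k t * (y * s p) = Real.pi * (k + 1 / 2) * (s p / s t) * y := by
      rw [lam]
      ring
    rw [phi, phi, hn, hk]
    ring
  simp only [hintegrand] at hscale
  rw [← hscale, intervalIntegral.integral_const_mul, integral_cos_mul_mul_cos_mul, ← mul_assoc,
    mul_sqrt_two_div_mul_sqrt_two_div hp ht, overlap]
  ring

theorem Bmat_eq_overlap_sub (s : ℝ → ℝ) (m : ℕ) {p t : ℝ} (hp : 0 < s p) (ht : 0 < s t) :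
    Bmat s m p t =
      Matrix.of fun n k : Fin (m + 1) => overlap n k (s p / s t) - overlap n k 1 := by
  ext n k
  have hintegrable (t : ℝ) :
      IntervalIntegrable (fun x => phi s n x p * phi s k x t) volume 0 (s p) :=
    Continuous.intervalIntegrable (by unfold phi; fun_prop) _ _
  simp only [Bmat, Matrix.of_apply, mul_sub]
  rw [intervalIntegral.integral_sub (hintegrable t) (hintegrable p),
    integral_phi_mul_phi s n k hp ht, integral_phi_mul_phi s n k hp hp, div_self hp.ne']

theorem overlapDiff_ratio_apply (s : ℝ → ℝ) (m : ℕ) {p t : ℝ} (hp : 0 < s p) (ht : 0 < s t)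
    (v : Fin (m + 1) → ℝ) : overlapDiff m (s p / s t) v = (Bmat s m p t).mulVec v := by
  rw [Bmat_eq_overlap_sub s m hp ht]
  rfl

end Overlap

section FreeBoundary

variable {s s' : ℝ → ℝ} {α b M T : ℝ}

theorem norm_le_mul_rpow_neg_of_norm_rpow_smul_le {V : Type*} [NormedAddCommGroup V]
    [NormedSpace ℝ V] {v : V} {a t : ℝ} (ht : 0 < t) (h : ‖t ^ a • v‖ ≤ M) :
    ‖v‖ ≤ M * t ^ (-a) := by
  rw [Real.rpow_neg ht.le, ← div_eq_mul_inv, le_div_iff₀ (Real.rpow_pos_of_pos ht a), mul_comm]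
  rwa [norm_smul, Real.norm_of_nonneg (Real.rpow_nonneg ht.le a)] at h

theorem continuousOn_of_rpow_mul {S : Set ℝ} (hS : S ⊆ Ioi 0)
    (h : ContinuousOn (fun t => t ^ α * s' t) S) : ContinuousOn s' S := by
  have hpow : ContinuousOn (fun t : ℝ => t ^ α) S :=
    continuousOn_id.rpow_const fun t ht => Or.inl (mem_Ioi.1 (hS ht)).ne'
  refine (h.div hpow fun t ht => (Real.rpow_pos_of_pos (hS ht) α).ne').congr fun t ht => ?_
  exact (mul_div_cancel_left₀ _ (Real.rpow_pos_of_pos (hS ht) α).ne').symm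

theorem continuousOn_of_eq_add_integral (hs' : IntegrableOn s' (Icc 0 T))
    (hs : ∀ t ∈ Icc 0 T, s t = b + ∫ τ in 0..t, s' τ) : ContinuousOn s (Icc 0 T) := by
  refine (continuousOn_const.add ?_).congr hs
  rcases le_or_gt 0 T with hT | hT
  · rw [← uIcc_of_le hT] at hs' ⊢
    exact intervalIntegral.continuousOn_primitive_interval hs'
  · simp [Icc_eq_empty hT.not_ge]

theorem hasDerivAt_of_eq_add_integral (hs' : IntegrableOn s' (Icc 0 T))
    (hs : ∀ t ∈ Icc 0 T, s t = b + ∫ τ in 0..t, s' τ) (hs'_cont : ContinuousOn s' (Ioo 0 T))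
    {t : ℝ} (ht : t ∈ Ioo 0 T) : HasDerivAt s (s' t) t := by
  have ht_nhds : Ioo 0 T ∈ 𝓝 t := Ioo_mem_nhds ht.1 ht.2
  have hint : IntervalIntegrable s' volume 0 t :=
    (intervalIntegrable_iff_integrableOn_Icc_of_le ht.1.le).2
      (hs'.mono_set (Icc_subset_Icc_right ht.2.le))
  refine ((intervalIntegral.integral_hasDerivAt_right hint
    (hs'_cont.stronglyMeasurableAtFilter isOpen_Ioo t ht)
    (hs'_cont.continuousAt ht_nhds)).const_add b).congr_of_eventuallyEq ?_
  filter_upwards [ht_nhds] with r hr using hs r (Ioo_subset_Icc_self hr)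

theorem pos_of_eq_add_integral (hb : 0 < b) (hs' : ∀ t ∈ Icc 0 T, 0 ≤ s' t)
    (hs : ∀ t ∈ Icc 0 T, s t = b + ∫ τ in 0..t, s' τ) {t : ℝ} (ht : t ∈ Icc 0 T) : 0 < s t := by
  rw [hs t ht]
  exact add_pos_of_pos_of_nonneg hb (intervalIntegral.integral_nonneg ht.1
    fun r hr => hs' r ⟨hr.1, hr.2.trans ht.2⟩)

end FreeBoundary

theorem stmt_9_general (α T b : ℝ) (m : ℕ) (hα : α ∈ Set.Ioo (0 : ℝ) 1) (s s' : ℝ → ℝ)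
    (hs'int : IntegrableOn s' (Set.Icc 0 T))
    (hsAC : ∀ t ∈ Set.Icc (0 : ℝ) T, s t = b + ∫ τ in (0 : ℝ)..t, s' τ)
    (hs_pos : ∀ t ∈ Set.Icc (0 : ℝ) T, 0 < s t)
    (hs'_cont : ContinuousOn s' (Set.Ioo 0 T)) (N : ℝ)
    (hs'_bdd : ∀ t ∈ Set.Ioo (0 : ℝ) T, ‖t ^ (1 - α) * s' t‖ ≤ N)
    (w : ℝ → Fin (m + 1) → ℝ) (M : ℝ)
    (hw_meas : AEStronglyMeasurable w (volume.restrict (Set.Ioo 0 T)))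
    (hw_bdd : ∀ᵐ p ∂(volume.restrict (Set.Ioo 0 T)), ‖(p ^ (1 - α)) • w p‖ ≤ M) :
    ∃ d : ℝ → Fin (m + 1) → ℝ, IntegrableOn d (Set.Icc 0 T) ∧
      ∀ τ ∈ Set.Icc (0 : ℝ) T,
        ∫ p in (0 : ℝ)..τ, (τ - p) ^ (-α) • (Bmat s m p τ).mulVec (w p) =
          ∫ q in (0 : ℝ)..τ, d q := by
  have hw_le : ∀ᵐ p ∂volume.restrict (Ioo 0 T), ‖w p‖ ≤ M * p ^ (α - 1) := by
    filter_upwards [hw_bdd, ae_restrict_mem measurableSet_Ioo] with p hwp hp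
    simpa only [neg_sub] using norm_le_mul_rpow_neg_of_norm_rpow_smul_le hp.1 hwp
  have hs'_le (t : ℝ) (ht : t ∈ Ioo 0 T) : |s' t| ≤ N * t ^ (α - 1) := by
    simpa only [neg_sub, Real.norm_eq_abs] using
      norm_le_mul_rpow_neg_of_norm_rpow_smul_le (v := s' t) ht.1 (hs'_bdd t ht)
  obtain ⟨d, hd, hd_eq⟩ := exists_integrableOn_volterra_ratioKernel hα (contDiffOn_overlapDiff m)
    (overlapDiff_one m) (continuousOn_of_eq_add_integral hs'int hsAC) hs_pos
    (fun _ => hasDerivAt_of_eq_add_integral hs'int hsAC hs'_cont) hs'_cont hs'_le hw_meas hw_le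
  refine ⟨d, hd, fun τ hτ => (intervalIntegral.integral_congr fun p hp => ?_).trans (hd_eq τ hτ)⟩
  rw [uIcc_of_le hτ.1] at hp
  simp only [overlapDiff_ratio_apply s m (hs_pos p ⟨hp.1, hp.2.trans hτ.2⟩) (hs_pos τ hτ)]

/-- If `w` is measurable with `p ↦ p^{1−α} w(p) ∈ L^∞(0,T)`, then
`g₂(τ) = ∫₀^τ (τ−p)^{−α} B(p,τ) w(p) dp` has an absolutely continuous representative
`g̃₂` with `g̃₂(0) = 0`. -/
theorem stmt_9 (α T b : ℝ) (m : ℕ) (hα : α ∈ Set.Ioo (0:ℝ) 1) (hT : 0 < T) (hb : 0 < b)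
    (s s' : ℝ → ℝ)
    (hs'int : IntegrableOn s' (Set.Icc 0 T))
    (hsAC : ∀ t ∈ Set.Icc (0:ℝ) T, s t = b + ∫ τ in (0:ℝ)..t, s' τ)
    (hs'pos : ∀ t ∈ Set.Icc (0:ℝ) T, 0 ≤ s' t)
    (hs'cont : ContinuousOn (fun t : ℝ => t ^ (1 - α) * s' t) (Set.Icc 0 T))
    (w : ℝ → Fin (m + 1) → ℝ) (M : ℝ)
    (hw_meas : AEStronglyMeasurable w (volume.restrict (Set.Ioo 0 T)))
    (hw_bdd : ∀ᵐ p ∂(volume.restrict (Set.Ioo 0 T)), ‖(p ^ (1 - α)) • w p‖ ≤ M) :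
    ∃ g₂ : ℝ → Fin (m + 1) → ℝ,
      (∃ d : ℝ → Fin (m + 1) → ℝ, IntegrableOn d (Set.Icc 0 T) ∧
        ∀ τ ∈ Set.Icc (0:ℝ) T, g₂ τ = g₂ 0 + ∫ p in (0:ℝ)..τ, d p) ∧
      g₂ 0 = 0 ∧
      ∀ᵐ τ ∂(volume.restrict (Set.Ioo 0 T)),
        g₂ τ = ∫ p in (0:ℝ)..τ, ((τ - p) ^ (-α)) • (Bmat s m p τ).mulVec (w p) := by
  obtain ⟨N, hN⟩ := isCompact_Icc.exists_bound_of_continuousOn hs'cont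
  obtain ⟨d, hd, hg⟩ := stmt_9_general α T b m hα s s' hs'int hsAC
    (fun _ => pos_of_eq_add_integral hb hs'pos hsAC)
    (continuousOn_of_rpow_mul (fun _ ht => ht.1) (hs'cont.mono Ioo_subset_Icc_self))
    N (fun t ht => hN t (Ioo_subset_Icc_self ht)) w M hw_meas hw_bdd
  exact ⟨_, ⟨d, hd, fun τ hτ => by simpa using hg τ hτ⟩, by simp, ae_of_all _ fun _ => rfl⟩
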